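/- arXiv:1409.0840 — 3 statements merged into one kernel-verified Lean document; each statement's English description precedes it below -/
import Mathlib

section
/- Let Ω ⊆ ℝⁿ be a bounded open set. Let {p_j} ⊂ (1,∞) with p_j → ∞ and let u_j ∈ C(Ω̄) satisfy ∫_Ω |u_j|^{p_j − 2} u_j dx = 0 for every j. If u_j → u uniformly on Ω̄, then sup_{Ω̄} u + inf_{Ω̄} u = 0. -/
/-! The argument is one-sided. Suppose `m ≤ u` on `closure Ω` and `u x₀ + m > 0` for some `x₀`.
Then there are `0 < b < a` such that, for large `j`, `u_j ≥ -b` everywhere while `u_j ≥ a` on a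
nonempty open set `A ⊆ Ω`. Hence `|u_j|^{p_j-2} u_j` is at least `-b^{p_j-1}` on `Ω` and at least
`a^{p_j-1}` on `A`, so the vanishing mean forces `a^{p_j-1} |A| ≤ b^{p_j-1} |Ω|`, which is
impossible since `(a/b)^{p_j-1} → ∞`. With `m` the minimum and `u x₀` the maximum of `u` this is
`sup u + inf u ≤ 0` (`add_lower_bound_nonpos`); the same applied to `-u_j`, `-u` is the reverse
inequality. -/

open MeasureTheory Metric Filter
open scoped ENNReal NNReal

noncomputable section

lemma rpow_mul_self {t q : ℝ} (ht : 0 < t) : t ^ (q - 2) * t = t ^ (q - 1) := by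
  rw [← Real.rpow_add_one ht.ne']
  congr 1
  ring

lemma neg_rpow_le {t b q : ℝ} (hb : 0 < b) (hq : 1 < q) (ht : -b ≤ t) :
    -b ^ (q - 1) ≤ |t| ^ (q - 2) * t := by
  rcases le_or_gt 0 t with h | h
  · have h1 : 0 ≤ |t| ^ (q - 2) * t := by positivity
    have h2 : 0 ≤ b ^ (q - 1) := by positivity
    linarith
  · have h1 := rpow_mul_self (q := q) (neg_pos.2 h)
    have h2 : (-t) ^ (q - 1) ≤ b ^ (q - 1) :=
      Real.rpow_le_rpow (by linarith) (by linarith) (by linarith)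
    rw [abs_of_neg h]
    linarith

lemma rpow_le_of_le {t a q : ℝ} (ha : 0 < a) (hq : 1 < q) (ht : a ≤ t) :
    a ^ (q - 1) ≤ |t| ^ (q - 2) * t := by
  have h0 : 0 < t := ha.trans_le ht
  rw [abs_of_pos h0, rpow_mul_self h0]
  exact Real.rpow_le_rpow ha.le ht (by linarith)

/-- The one-sided estimate: no value of the limit `u` exceeds `-m` when `m` is a lower bound
of `u`. -/
lemma add_lower_bound_nonpos {n : ℕ}
    {Ω : Set (EuclideanSpace ℝ (Fin n))} (hΩo : IsOpen Ω) (hΩb : Bornology.IsBounded Ω)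
    {pseq : ℕ → ℝ} (hptop : Tendsto pseq atTop atTop)
    {useq : ℕ → EuclideanSpace ℝ (Fin n) → ℝ}
    (hcont : ∀ j, ContinuousOn (useq j) (closure Ω))
    (hmean : ∀ j, (∫ x in Ω, |useq j x| ^ (pseq j - 2) * useq j x) = 0)
    {u : EuclideanSpace ℝ (Fin n) → ℝ}
    (hconv : TendstoUniformlyOn useq u atTop (closure Ω))
    {m : ℝ} (hm : ∀ x ∈ closure Ω, m ≤ u x)
    {x₀ : EuclideanSpace ℝ (Fin n)} (hx₀ : x₀ ∈ closure Ω) : u x₀ + m ≤ 0 := by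
  by_contra! hpos
  have hucont : ContinuousOn u (closure Ω) :=
    hconv.continuousOn (Frequently.of_forall hcont)
  have hlt : max (-m) 0 < u x₀ := max_lt (by linarith) (by linarith [hm x₀ hx₀])
  obtain ⟨b, hcb, hbu⟩ := exists_between hlt
  obtain ⟨a, hba, hau⟩ := exists_between hbu
  obtain ⟨a', haa', ha'u⟩ := exists_between hau
  have hb : 0 < b := (le_max_right _ _).trans_lt hcb
  have hmb : -m < b := (le_max_left _ _).trans_lt hcb
  have ha : 0 < a := hb.trans hba
  set A := Ω ∩ u ⁻¹' Set.Ioi a' with hA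
  have hAo : IsOpen A := (hucont.mono subset_closure).isOpen_inter_preimage hΩo isOpen_Ioi
  have hAne : A.Nonempty := by
    have h1 : ∀ᶠ x in nhdsWithin x₀ Ω, a' < u x :=
      ((hucont x₀ hx₀).mono subset_closure).eventually (lt_mem_nhds ha'u)
    have : (nhdsWithin x₀ Ω).NeBot := mem_closure_iff_nhdsWithin_neBot.1 hx₀
    obtain ⟨y, hy, hyΩ⟩ := (h1.and self_mem_nhdsWithin).exists
    exact ⟨y, hyΩ, hy⟩
  have hΩfin : volume Ω ≠ ∞ := hΩb.measure_lt_top.ne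
  have hAfin : volume A ≠ ∞ := (hΩb.subset Set.inter_subset_left).measure_lt_top.ne
  have hApos : 0 < volume.real A :=
    ENNReal.toReal_pos (hAo.measure_pos volume hAne).ne' hAfin
  have hΩK : IsCompact (closure Ω) := hΩb.isCompact_closure
  have hδ : 0 < min (b + m) (a' - a) := lt_min (by linarith) (by linarith)
  -- The growth of `(a / b) ^ (p_j - 1)`, to be compared with `|Ω| / |A|`.
  have hgrow : Tendsto (fun j => (a / b) ^ (pseq j - 1)) atTop atTop :=
    (tendsto_rpow_atTop_of_base_gt_one _ ((one_lt_div hb).2 hba)).comp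
      (tendsto_atTop_add_const_right _ (-1) hptop)
  obtain ⟨j, hj, hpj, hgj⟩ := ((Metric.tendstoUniformlyOn_iff.1 hconv _ hδ).and
    ((hptop.eventually_gt_atTop 2).and
      (hgrow.eventually_gt_atTop (volume.real Ω / volume.real A)))).exists
  have hint : IntegrableOn (fun x => |useq j x| ^ (pseq j - 2) * useq j x) Ω := by
    refine (ContinuousOn.integrableOn_compact hΩK ?_).mono_set subset_closure
    exact ((hcont j).abs.rpow_const fun x _ => Or.inr (by linarith)).mul (hcont j)
  have hAint : IntegrableOn (A.indicator fun _ => a ^ (pseq j - 1)) Ω :=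
    (integrableOn_const hΩfin).indicator hAo.measurableSet
  have hbint : IntegrableOn (fun _ => b ^ (pseq j - 1)) Ω := integrableOn_const hΩfin
  have hAfull : IntegrableOn (fun _ => a ^ (pseq j - 1)) A := integrableOn_const hAfin
  have hle : ∀ x ∈ Ω, A.indicator (fun _ => a ^ (pseq j - 1)) x - b ^ (pseq j - 1)
      ≤ |useq j x| ^ (pseq j - 2) * useq j x := by
    intro x hx
    have hd := hj x (subset_closure hx)
    rw [Real.dist_eq, abs_lt, lt_min_iff] at hd
    have hd1 := hd.2
    have hbp : 0 < b ^ (pseq j - 1) := by positivity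
    by_cases hxA : x ∈ A
    · rw [Set.indicator_of_mem hxA]
      have hxa : a' < u x := hxA.2
      linarith [rpow_le_of_le (q := pseq j) ha (by linarith)
        (show a ≤ useq j x by linarith)]
    · rw [Set.indicator_of_notMem hxA]
      linarith [neg_rpow_le (q := pseq j) hb (by linarith)
        (show -b ≤ useq j x by linarith [hm x (subset_closure hx)])]
  have hI := setIntegral_mono_on (hAint.sub hbint) hint hΩo.measurableSet hle
  simp only [Pi.sub_apply] at hI
  rw [hmean j, integral_sub hAint hbint, setIntegral_indicator hAo.measurableSet,
    Set.inter_eq_right.2 (Set.inter_subset_left : A ⊆ Ω), setIntegral_const,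
    setIntegral_const, smul_eq_mul, smul_eq_mul] at hI
  have hbp : 0 < b ^ (pseq j - 1) := by positivity
  rw [Real.div_rpow ha.le hb.le, div_lt_div_iff₀ hApos hbp] at hgj
  linarith

/-- if `u_j ∈ C(Ω̄)` satisfy `∫_Ω |u_j|^{p_j-2} u_j = 0` with `p_j → ∞`, and
`u_j → u` uniformly on `Ω̄`, then `sup_Ω̄ u + inf_Ω̄ u = 0`. -/
theorem sup_add_inf_eq_zero (n : ℕ) (hn : 1 ≤ n)
    (Ω : Set (EuclideanSpace ℝ (Fin n))) (hΩo : IsOpen Ω) (hΩb : Bornology.IsBounded Ω)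
    (hΩne : Ω.Nonempty)
    (pseq : ℕ → ℝ) (hp : ∀ j, 1 < pseq j) (hptop : Tendsto pseq atTop atTop)
    (useq : ℕ → EuclideanSpace ℝ (Fin n) → ℝ)
    (hcont : ∀ j, ContinuousOn (useq j) (closure Ω))
    (hmean : ∀ j, (∫ x in Ω, |useq j x| ^ (pseq j - 2) * useq j x) = 0)
    (u : EuclideanSpace ℝ (Fin n) → ℝ)
    (hconv : TendstoUniformlyOn useq u atTop (closure Ω)) :
    sSup (u '' closure Ω) + sInf (u '' closure Ω) = 0 := by
  have hK : IsCompact (closure Ω) := hΩb.isCompact_closure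
  have hucont : ContinuousOn u (closure Ω) :=
    hconv.continuousOn (Frequently.of_forall hcont)
  obtain ⟨x₀, hx₀, hmax⟩ := hK.exists_isMaxOn hΩne.closure hucont
  obtain ⟨x₁, hx₁, hmin⟩ := hK.exists_isMinOn hΩne.closure hucont
  have hS : sSup (u '' closure Ω) = u x₀ :=
    IsGreatest.csSup_eq ⟨⟨x₀, hx₀, rfl⟩, by rintro _ ⟨x, hx, rfl⟩; exact hmax hx⟩
  have hI : sInf (u '' closure Ω) = u x₁ :=
    IsLeast.csInf_eq ⟨⟨x₁, hx₁, rfl⟩, by rintro _ ⟨x, hx, rfl⟩; exact hmin hx⟩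
  rw [hS, hI]
  have h1 : u x₀ + u x₁ ≤ 0 :=
    add_lower_bound_nonpos hΩo hΩb hptop hcont hmean hconv (fun x hx => hmin hx) hx₀
  have h2 : -u x₁ + -u x₀ ≤ 0 := by
    refine add_lower_bound_nonpos (useq := fun j x => -useq j x) (u := fun x => -u x)
      hΩo hΩb hptop (fun j => (hcont j).neg) (fun j => ?_) ?_
      (fun x hx => neg_le_neg (hmax hx)) hx₁
    · simp only [abs_neg, mul_neg, integral_neg, hmean j, neg_zero]
    · rw [Metric.tendstoUniformlyOn_iff] at hconv ⊢
      simpa only [dist_neg_neg] using hconv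
  linarith

end
end

section
/- Let Ω ⊆ ℝⁿ be a bounded open connected set and s ∈ (0,1). For every bounded function u : Ω → ℝ with [u]_{s,∞} < ∞, u ≠ 0, and sup_Ω u + inf_Ω u = 0, one has 2 / diam(Ω)^s ≤ [u]_{s,∞} / ‖u‖_{L^∞(Ω)}. Consequently 2 / diam(Ω)^s ≤ λ₁(s,∞). -/
/-!
The pointwise bound: if `u` has Hölder seminorm `H` and `D` is the diameter, then
`u x - u y ≤ H * D ^ s` for all `x, y ∈ Ω`, hence `sup u - inf u ≤ H * D ^ s`. Since
`inf u = - sup u`, also `‖u‖_∞ ≤ sup u`, so `2 * ‖u‖_∞ ≤ H * D ^ s`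
(`two_mul_supAbs_le`).

For the bound on `λ₁(s,∞)` the infimum must be taken over a nonempty set, because `sInf ∅ = 0`
in `ℝ`. The first coordinate function, recentred so that its supremum and infimum are opposite, is
admissible (`exists_admissible`): it is 1-Lipschitz, hence `s`-Hölder on a bounded set, and it is
not constant on a nonempty open set.
-/

open MeasureTheory Metric Filter
open scoped ENNReal NNReal

noncomputable section

/-- The set of Hölder quotients `|u(x)-u(y)|/|x-y|^s` over `x ≠ y` in `Ω`. -/
def holderSet (n : ℕ) (Ω : Set (EuclideanSpace ℝ (Fin n))) (s : ℝ)
    (u : EuclideanSpace ℝ (Fin n) → ℝ) : Set ℝ :=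
  { r | ∃ x ∈ Ω, ∃ y ∈ Ω, x ≠ y ∧ r = |u x - u y| / ‖x - y‖ ^ s }

/-- The Hölder seminorm `[u]_{s,∞}`. -/
def holderSemi (n : ℕ) (Ω : Set (EuclideanSpace ℝ (Fin n))) (s : ℝ)
    (u : EuclideanSpace ℝ (Fin n) → ℝ) : ℝ :=
  sSup (holderSet n Ω s u)

/-- The sup norm `‖u‖_{L^∞(Ω)}` of a bounded function. -/
def supAbs (n : ℕ) (Ω : Set (EuclideanSpace ℝ (Fin n)))
    (u : EuclideanSpace ℝ (Fin n) → ℝ) : ℝ :=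
  sSup ((fun x => |u x|) '' Ω)

/-- The limit eigenvalue `λ₁(s,∞)`. -/
def lambda1Infty (n : ℕ) (Ω : Set (EuclideanSpace ℝ (Fin n))) (s : ℝ) : ℝ :=
  sInf { r : ℝ | ∃ u : EuclideanSpace ℝ (Fin n) → ℝ,
    BddAbove ((fun x => |u x|) '' Ω) ∧
    BddAbove (holderSet n Ω s u) ∧
    (∃ x ∈ Ω, u x ≠ 0) ∧
    sSup (u '' Ω) + sInf (u '' Ω) = 0 ∧
    r = holderSemi n Ω s u / supAbs n Ω u }

theorem abs_sub_le_holderSemi_mul {n : ℕ} {Ω : Set (EuclideanSpace ℝ (Fin n))}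
    (hΩb : Bornology.IsBounded Ω) {s : ℝ} (hs : 0 < s) {u : EuclideanSpace ℝ (Fin n) → ℝ}
    (hH : BddAbove (holderSet n Ω s u)) {x y : EuclideanSpace ℝ (Fin n)}
    (hx : x ∈ Ω) (hy : y ∈ Ω) :
    |u x - u y| ≤ holderSemi n Ω s u * Metric.diam Ω ^ s := by
  have hH0 : 0 ≤ holderSemi n Ω s u := by
    apply Real.sSup_nonneg
    rintro r ⟨a, _, b, _, _, rfl⟩
    positivity
  rcases eq_or_ne x y with rfl | hxy
  · rw [sub_self, abs_zero]
    exact mul_nonneg hH0 (Real.rpow_nonneg Metric.diam_nonneg _)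
  · have hpos : 0 < ‖x - y‖ ^ s := Real.rpow_pos_of_pos (norm_pos_iff.2 (sub_ne_zero.2 hxy)) _
    have h1 : |u x - u y| / ‖x - y‖ ^ s ≤ holderSemi n Ω s u :=
      le_csSup hH ⟨x, hx, y, hy, hxy, rfl⟩
    have h2 : ‖x - y‖ ≤ Metric.diam Ω := by
      rw [← dist_eq_norm]
      exact Metric.dist_le_diam_of_mem hΩb hx hy
    calc |u x - u y| ≤ holderSemi n Ω s u * ‖x - y‖ ^ s := (div_le_iff₀ hpos).1 h1
      _ ≤ _ := by gcongr

theorem two_mul_supAbs_le {n : ℕ} {Ω : Set (EuclideanSpace ℝ (Fin n))}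
    (hΩb : Bornology.IsBounded Ω) (hne : Ω.Nonempty) {s : ℝ} (hs : 0 < s)
    {u : EuclideanSpace ℝ (Fin n) → ℝ} (hB : BddAbove ((fun x => |u x|) '' Ω))
    (hH : BddAbove (holderSet n Ω s u)) (h0 : sSup (u '' Ω) + sInf (u '' Ω) = 0) :
    2 * supAbs n Ω u ≤ holderSemi n Ω s u * Metric.diam Ω ^ s := by
  obtain ⟨C, hC⟩ := hB
  have hC' : ∀ x ∈ Ω, |u x| ≤ C := fun x hx => hC ⟨x, hx, rfl⟩
  have hA : BddAbove (u '' Ω) := by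
    refine ⟨C, ?_⟩
    rintro _ ⟨x, hx, rfl⟩
    exact (abs_le.1 (hC' x hx)).2
  have hI : BddBelow (u '' Ω) := by
    refine ⟨-C, ?_⟩
    rintro _ ⟨x, hx, rfl⟩
    exact (abs_le.1 (hC' x hx)).1
  have hM : supAbs n Ω u ≤ sSup (u '' Ω) := by
    apply csSup_le (hne.image _)
    rintro _ ⟨x, hx, rfl⟩
    have h1 := le_csSup hA ⟨x, hx, rfl⟩
    have h2 := csInf_le hI ⟨x, hx, rfl⟩
    exact abs_le.2 ⟨by linarith, h1⟩
  have hosc : sSup (u '' Ω) - holderSemi n Ω s u * Metric.diam Ω ^ s ≤ sInf (u '' Ω) := by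
    apply le_csInf (hne.image _)
    rintro _ ⟨y, hy, rfl⟩
    rw [sub_le_iff_le_add]
    apply csSup_le (hne.image _)
    rintro _ ⟨x, hx, rfl⟩
    have := (abs_le.1 (abs_sub_le_holderSemi_mul hΩb hs hH hx hy)).2
    linarith
  linarith

/-- The infimum defining `λ₁(s,∞)` is over a nonempty set. -/
theorem exists_admissible {n : ℕ} (hn : 1 ≤ n) {Ω : Set (EuclideanSpace ℝ (Fin n))}
    (hΩo : IsOpen Ω) (hΩb : Bornology.IsBounded Ω) (hne : Ω.Nonempty) {s : ℝ} (hs : s ≤ 1) :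
    ∃ u : EuclideanSpace ℝ (Fin n) → ℝ,
      BddAbove ((fun x => |u x|) '' Ω) ∧ BddAbove (holderSet n Ω s u) ∧
      (∃ x ∈ Ω, u x ≠ 0) ∧ sSup (u '' Ω) + sInf (u '' Ω) = 0 := by
  let i : Fin n := ⟨0, hn⟩
  let f : EuclideanSpace ℝ (Fin n) → ℝ := fun x => x i
  have hf : ∀ x y, |f x - f y| ≤ ‖x - y‖ := fun x y => PiLp.norm_apply_le (x - y) i
  obtain ⟨R, hR⟩ := hΩb.exists_norm_le
  have hfR : ∀ x ∈ Ω, |f x| ≤ R := fun x hx => (PiLp.norm_apply_le x i).trans (hR x hx)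
  have hA : BddAbove (f '' Ω) := by
    refine ⟨R, ?_⟩
    rintro _ ⟨x, hx, rfl⟩
    exact (abs_le.1 (hfR x hx)).2
  have hI : BddBelow (f '' Ω) := by
    refine ⟨-R, ?_⟩
    rintro _ ⟨x, hx, rfl⟩
    exact (abs_le.1 (hfR x hx)).1
  let c : ℝ := (sSup (f '' Ω) + sInf (f '' Ω)) / 2
  have himg : (fun x => f x - c) '' Ω = OrderIso.addRight (-c) '' (f '' Ω) := by
    rw [Set.image_image]
    rfl
  refine ⟨fun x => f x - c, ⟨R + |c|, ?_⟩, ⟨Metric.diam Ω ^ (1 - s), ?_⟩, ?_, ?_⟩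
  · rintro _ ⟨x, hx, rfl⟩
    exact (abs_sub _ _).trans (by linarith [hfR x hx])
  · rintro _ ⟨x, hx, y, hy, hxy, rfl⟩
    have hpos : 0 < ‖x - y‖ := norm_pos_iff.2 (sub_ne_zero.2 hxy)
    have hd : ‖x - y‖ ≤ Metric.diam Ω := by
      rw [← dist_eq_norm]
      exact Metric.dist_le_diam_of_mem hΩb hx hy
    rw [div_le_iff₀ (Real.rpow_pos_of_pos hpos _), sub_sub_sub_cancel_right]
    calc |f x - f y| ≤ ‖x - y‖ := hf x y
      _ = ‖x - y‖ ^ (1 - s) * ‖x - y‖ ^ s := by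
        rw [← Real.rpow_add hpos, sub_add_cancel, Real.rpow_one]
      _ ≤ _ := by
        have : 0 ≤ 1 - s := by linarith
        gcongr
  · obtain ⟨x, hx⟩ := hne
    obtain ⟨ε, hε, hball⟩ := Metric.isOpen_iff.1 hΩo x hx
    let y := x + EuclideanSpace.single i (ε / 2)
    have hy : y ∈ Ω := by
      apply hball
      rw [Metric.mem_ball, dist_eq_norm, add_sub_cancel_left, PiLp.norm_single,
        Real.norm_of_nonneg (by positivity)]
      linarith
    have hfy : f y = f x + ε / 2 := by simp [f, y]
    by_contra! h
    have h1 := h x hx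
    have h2 := h y hy
    linarith
  · rw [himg, ← OrderIso.map_csSup' _ (hne.image _) hA, ← OrderIso.map_csInf' _ (hne.image _) hI]
    simp only [OrderIso.addRight_apply, c]
    ring

/-- `2/diam(Ω)^s ≤ [u]_{s,∞}/‖u‖_∞` for every admissible `u`, hence
`2/diam(Ω)^s ≤ λ₁(s,∞)`. -/
theorem holder_quotient_lower_bound (n : ℕ) (hn : 1 ≤ n)
    (Ω : Set (EuclideanSpace ℝ (Fin n))) (hΩo : IsOpen Ω) (hΩb : Bornology.IsBounded Ω)
    (hΩc : IsConnected Ω) (s : ℝ) (hs : s ∈ Set.Ioo (0 : ℝ) 1) :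
    (∀ u : EuclideanSpace ℝ (Fin n) → ℝ,
      BddAbove ((fun x => |u x|) '' Ω) →
      BddAbove (holderSet n Ω s u) →
      (∃ x ∈ Ω, u x ≠ 0) →
      sSup (u '' Ω) + sInf (u '' Ω) = 0 →
      2 / Metric.diam Ω ^ s ≤ holderSemi n Ω s u / supAbs n Ω u) ∧
    2 / Metric.diam Ω ^ s ≤ lambda1Infty n Ω s := by
  have key : ∀ u : EuclideanSpace ℝ (Fin n) → ℝ,
      BddAbove ((fun x => |u x|) '' Ω) →
      BddAbove (holderSet n Ω s u) →
      (∃ x ∈ Ω, u x ≠ 0) →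
      sSup (u '' Ω) + sInf (u '' Ω) = 0 →
      2 / Metric.diam Ω ^ s ≤ holderSemi n Ω s u / supAbs n Ω u := by
    rintro u hB hH ⟨x, hx, hux⟩ h0
    have hM : 0 < supAbs n Ω u := (abs_pos.2 hux).trans_le (le_csSup hB ⟨x, hx, rfl⟩)
    have h2 := two_mul_supAbs_le hΩb hΩc.nonempty hs.1 hB hH h0
    -- `2 * supAbs ≤ _ * diam ^ s` with a positive left-hand side rules out `diam ^ s = 0`.
    have hD : 0 < Metric.diam Ω ^ s := by
      refine (Real.rpow_nonneg Metric.diam_nonneg s).lt_of_ne' fun h => ?_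
      rw [h, mul_zero] at h2
      linarith
    exact (div_le_div_iff₀ hD hM).2 h2
  refine ⟨key, le_csInf ?_ ?_⟩
  · obtain ⟨u, h1, h2, h3, h4⟩ := exists_admissible hn hΩo hΩb hΩc.nonempty hs.2.le
    exact ⟨_, u, h1, h2, h3, h4, rfl⟩
  · rintro _ ⟨u, h1, h2, h3, h4, rfl⟩
    exact key u h1 h2 h3 h4

end
end

section
/- Let Ω ⊆ ℝⁿ be a bounded open connected set with C¹ boundary and s ∈ (0,1). Then λ₁(s,∞) = 2 / diam(Ω)^s, i.e. the infimum defining λ₁(s,∞) equals 2 / diam(Ω)^s. -/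
/-!
The value `2 / diam Ω ^ s` is a lower bound for every admissible quotient: the normalisation
`sup u + inf u = 0` forces `sup u = ‖u‖_∞` and `inf u = -‖u‖_∞`, so the oscillation of `u` is
`2 ‖u‖_∞`, while Hölder continuity bounds the oscillation by `[u]_{s,∞} diam Ω ^ s`
(`two_div_le_quotient`).

The bound is attained. As `closure Ω` is compact, there are `a, b ∈ closure Ω` with
`|b - a| = diam Ω`. The function `u x = |x - a| ^ s - diam Ω ^ s / 2` has Hölder seminorm at most
`1`, by subadditivity of `t ↦ t ^ s` and the triangle inequality, and its supremum and infimum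
over `Ω`, approached at `b` and `a`, are `± diam Ω ^ s / 2`.
-/


open MeasureTheory Metric Filter
open scoped ENNReal NNReal

noncomputable section

/-- `Ω` has `C¹` boundary: near every boundary point, `Ω` is the sublevel set of a `C¹`
function with non-vanishing derivative. -/
def HasC1Boundary {n : ℕ} (Ω : Set (EuclideanSpace ℝ (Fin n))) : Prop :=
  ∀ x ∈ frontier Ω, ∃ (f : EuclideanSpace ℝ (Fin n) → ℝ) (U : Set (EuclideanSpace ℝ (Fin n))),
    IsOpen U ∧ x ∈ U ∧ ContDiffOn ℝ 1 f U ∧ (∀ y ∈ U, fderiv ℝ f y ≠ 0) ∧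
    Ω ∩ U = {y ∈ U | f y < 0}

/-- A bounded function with `sup u + inf u = 0` satisfies `‖u‖_∞ = sup u`. -/
lemma supAbs_eq_sSup {n : ℕ} {Ω : Set (EuclideanSpace ℝ (Fin n))}
    {u : EuclideanSpace ℝ (Fin n) → ℝ} (hne : Ω.Nonempty)
    (hb : BddAbove ((fun x => |u x|) '' Ω)) (h0 : sSup (u '' Ω) + sInf (u '' Ω) = 0) :
    supAbs n Ω u = sSup (u '' Ω) := by
  obtain ⟨C, hC⟩ := hb
  have hC' : ∀ x ∈ Ω, |u x| ≤ C := fun x hx => hC ⟨x, hx, rfl⟩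
  have hA : BddAbove (u '' Ω) := by
    refine ⟨C, ?_⟩
    rintro _ ⟨x, hx, rfl⟩
    exact (abs_le.1 (hC' x hx)).2
  have hB : BddBelow (u '' Ω) := by
    refine ⟨-C, ?_⟩
    rintro _ ⟨x, hx, rfl⟩
    exact (abs_le.1 (hC' x hx)).1
  apply le_antisymm
  · apply csSup_le (hne.image _)
    rintro _ ⟨x, hx, rfl⟩
    have h1 := le_csSup hA ⟨x, hx, rfl⟩
    have h2 := csInf_le hB ⟨x, hx, rfl⟩
    exact abs_le.2 ⟨by linarith, h1⟩
  · apply csSup_le (hne.image _)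
    rintro _ ⟨x, hx, rfl⟩
    exact (le_abs_self _).trans (le_csSup ⟨C, hC⟩ ⟨x, hx, rfl⟩)

lemma sub_le_holderSemi_mul {n : ℕ} {Ω : Set (EuclideanSpace ℝ (Fin n))} {s : ℝ}
    {u : EuclideanSpace ℝ (Fin n) → ℝ} (hs : 0 ≤ s) (hΩb : Bornology.IsBounded Ω)
    (hh : BddAbove (holderSet n Ω s u)) {x y : EuclideanSpace ℝ (Fin n)}
    (hx : x ∈ Ω) (hy : y ∈ Ω) :
    u x - u y ≤ holderSemi n Ω s u * diam Ω ^ s := by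
  have h0 : 0 ≤ holderSemi n Ω s u := by
    apply Real.sSup_nonneg
    rintro _ ⟨x, -, y, -, -, rfl⟩
    positivity
  by_cases hxy : x = y
  · subst hxy
    rw [sub_self]
    exact mul_nonneg h0 (Real.rpow_nonneg diam_nonneg _)
  have hpos : 0 < ‖x - y‖ := norm_pos_iff.2 (sub_ne_zero.2 hxy)
  have h1 : |u x - u y| / ‖x - y‖ ^ s ≤ holderSemi n Ω s u :=
    le_csSup hh ⟨x, hx, y, hy, hxy, rfl⟩
  rw [div_le_iff₀ (Real.rpow_pos_of_pos hpos s)] at h1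
  have h2 : ‖x - y‖ ≤ diam Ω := by
    rw [← dist_eq_norm]
    exact dist_le_diam_of_mem hΩb hx hy
  calc u x - u y ≤ |u x - u y| := le_abs_self _
    _ ≤ _ := h1
    _ ≤ _ := by gcongr

/-- The lower bound: the oscillation `2 ‖u‖_∞` is at most `[u]_{s,∞} diam Ω ^ s`. -/
lemma two_div_le_quotient {n : ℕ} {Ω : Set (EuclideanSpace ℝ (Fin n))} {s : ℝ}
    {u : EuclideanSpace ℝ (Fin n) → ℝ} (hs : 0 ≤ s) (hΩb : Bornology.IsBounded Ω)
    (hd : 0 < diam Ω) (hb : BddAbove ((fun x => |u x|) '' Ω))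
    (hh : BddAbove (holderSet n Ω s u)) (hu : ∃ x ∈ Ω, u x ≠ 0)
    (h0 : sSup (u '' Ω) + sInf (u '' Ω) = 0) :
    2 / diam Ω ^ s ≤ holderSemi n Ω s u / supAbs n Ω u := by
  obtain ⟨z, hz, huz⟩ := hu
  have hne : Ω.Nonempty := ⟨z, hz⟩
  have hM : 0 < supAbs n Ω u := (abs_pos.2 huz).trans_le (le_csSup hb ⟨z, hz, rfl⟩)
  have hS := supAbs_eq_sSup hne hb h0
  have key : sSup (u '' Ω) ≤ sInf (u '' Ω) + holderSemi n Ω s u * diam Ω ^ s := by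
    apply csSup_le (hne.image _)
    rintro _ ⟨x, hx, rfl⟩
    rw [← sub_le_iff_le_add]
    apply le_csInf (hne.image _)
    rintro _ ⟨y, hy, rfl⟩
    linarith [sub_le_holderSemi_mul hs hΩb hh hx hy]
  rw [div_le_div_iff₀ (Real.rpow_pos_of_pos hd s) hM]
  linarith

lemma abs_rpow_sub_rpow_le {s a b : ℝ} (hs : 0 ≤ s) (hs1 : s ≤ 1) (ha : 0 ≤ a) (hb : 0 ≤ b) :
    |a ^ s - b ^ s| ≤ |a - b| ^ s := by
  wlog hab : b ≤ a generalizing a b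
  · rw [abs_sub_comm, abs_sub_comm a b]
    exact this hb ha (le_of_not_ge hab)
  have h1 : b ^ s ≤ a ^ s := Real.rpow_le_rpow hb hab hs
  rw [abs_of_nonneg (sub_nonneg.2 h1), abs_of_nonneg (sub_nonneg.2 hab)]
  have h2 := Real.rpow_add_le_add_rpow (sub_nonneg.2 hab) hb hs hs1
  rw [sub_add_cancel] at h2
  linarith

lemma exists_dist_eq_diam {X : Type*} [PseudoMetricSpace X] [ProperSpace X] {A : Set X}
    (hne : A.Nonempty) (hA : Bornology.IsBounded A) :
    ∃ a ∈ closure A, ∃ b ∈ closure A, dist b a = diam A := by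
  have hc : IsCompact (closure A) := hA.isCompact_closure
  obtain ⟨⟨a, b⟩, ⟨ha, hb⟩, hmax⟩ := (hc.prod hc).exists_isMaxOn (hne.closure.prod hne.closure)
    (f := fun p : X × X => dist p.2 p.1) (by fun_prop)
  refine ⟨a, ha, b, hb, le_antisymm ?_ ?_⟩
  · rw [← diam_closure]
    exact dist_le_diam_of_mem hc.isBounded hb ha
  · apply diam_le_of_forall_dist_le dist_nonneg
    intro x hx y hy
    exact hmax (a := (y, x)) ⟨subset_closure hy, subset_closure hx⟩

/-- `λ₁(s,∞) = 2 / diam(Ω)^s`. -/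
theorem lambda1Infty_eq (n : ℕ) (hn : 1 ≤ n)
    (Ω : Set (EuclideanSpace ℝ (Fin n))) (hΩo : IsOpen Ω) (hΩb : Bornology.IsBounded Ω)
    (hΩc : IsConnected Ω) (hΩc1 : HasC1Boundary Ω)
    (s : ℝ) (hs : s ∈ Set.Ioo (0 : ℝ) 1) :
    lambda1Infty n Ω s = 2 / Metric.diam Ω ^ s := by
  obtain ⟨hs0, hs1⟩ := hs
  have : Nonempty (Fin n) := ⟨⟨0, hn⟩⟩
  have hne : Ω.Nonempty := hΩc.nonempty
  have hd : 0 < diam Ω := by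
    obtain ⟨x, hx⟩ := hne
    exact diam_pos (infinite_of_mem_nhds x (hΩo.mem_nhds hx)).nontrivial hΩb
  obtain ⟨a, ha, b, hb, hab⟩ := exists_dist_eq_diam hne hΩb
  set D := diam Ω ^ s with hD
  have hDpos : 0 < D := Real.rpow_pos_of_pos hd s
  let u : EuclideanSpace ℝ (Fin n) → ℝ := fun x => dist x a ^ s - D / 2
  have hcont : Continuous u :=
    ((continuous_id.dist continuous_const).rpow_const fun _ => Or.inr hs0.le).sub continuous_const
  have hua : u a = -(D / 2) := by simp [u, Real.zero_rpow hs0.ne']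
  have hub : u b = D / 2 := by
    simp only [u, hab, ← hD]
    ring
  have hle : ∀ x ∈ Ω, u x ≤ D / 2 := fun x hx => by
    have h1 : dist x a ≤ diam Ω := by
      rw [← diam_closure]
      exact dist_le_diam_of_mem hΩb.closure (subset_closure hx) ha
    have h2 : dist x a ^ s ≤ D := Real.rpow_le_rpow dist_nonneg h1 hs0.le
    simp only [u]
    linarith
  have hge : ∀ x ∈ Ω, -(D / 2) ≤ u x := fun x _ => by
    have : 0 ≤ dist x a ^ s := by positivity
    simp only [u]
    linarith
  have hsup : sSup (u '' Ω) = D / 2 := by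
    refine (isLUB_of_mem_closure ?_ ?_).csSup_eq (hne.image _)
    · rintro _ ⟨x, hx, rfl⟩
      exact hle x hx
    · rw [← hub]
      exact mem_closure_image hcont.continuousAt hb
  have hinf : sInf (u '' Ω) = -(D / 2) := by
    refine (isGLB_of_mem_closure ?_ ?_).csInf_eq (hne.image _)
    · rintro _ ⟨x, hx, rfl⟩
      exact hge x hx
    · rw [← hua]
      exact mem_closure_image hcont.continuousAt ha
  have hbdd : BddAbove ((fun x => |u x|) '' Ω) := by
    refine ⟨D / 2, ?_⟩
    rintro _ ⟨x, hx, rfl⟩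
    exact abs_le.2 ⟨hge x hx, hle x hx⟩
  have hquot : ∀ r ∈ holderSet n Ω s u, r ≤ 1 := by
    rintro _ ⟨x, -, y, -, -, rfl⟩
    refine div_le_one_of_le₀ ?_ (by positivity)
    have h1 : u x - u y = dist x a ^ s - dist y a ^ s := by
      simp only [u]
      ring
    rw [h1, ← dist_eq_norm]
    exact (abs_rpow_sub_rpow_le hs0.le hs1.le dist_nonneg dist_nonneg).trans
      (Real.rpow_le_rpow (abs_nonneg _) (abs_dist_sub_le x y a) hs0.le)
  have hzero : sSup (u '' Ω) + sInf (u '' Ω) = 0 := by rw [hsup, hinf, add_neg_cancel]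
  have hnz : ∃ x ∈ Ω, u x ≠ 0 := by
    by_contra! h
    -- Otherwise `u '' Ω = {0}`, whose supremum is not `D / 2 > 0`.
    have h1 : sSup (u '' Ω) ≤ 0 := by
      apply csSup_le (hne.image _)
      rintro _ ⟨x, hx, rfl⟩
      exact (h x hx).le
    linarith
  refine IsLeast.csInf_eq ⟨⟨u, hbdd, ⟨1, hquot⟩, hnz, hzero, ?_⟩, ?_⟩
  · apply le_antisymm (two_div_le_quotient hs0.le hΩb hd hbdd ⟨1, hquot⟩ hnz hzero)
    rw [supAbs_eq_sSup hne hbdd hzero, hsup]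
    calc holderSemi n Ω s u / (D / 2) ≤ 1 / (D / 2) := by
          gcongr
          exact Real.sSup_le hquot zero_le_one
      _ = 2 / D := one_div_div D 2
  · rintro _ ⟨v, hv, hvh, hvn, hv0, rfl⟩
    exact two_div_le_quotient hs0.le hΩb hd hv hvh hvn hv0

end
end
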